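/- arXiv:1307.3649 — 7 statements merged into one kernel-verified Lean document; each statement's English description precedes it below -/
import Mathlib

section
/- Euler's identity for continuants: let (u_1, …, u_t) be a sequence of positive integers with continuants 𝔠_{i,j}. Then for all indices with 1 ≤ i ≤ l ≤ m+2 and m ≤ s ≤ t, one has 𝔠_{i,s}·𝔠_{l,m} − 𝔠_{i,m}·𝔠_{l,s} = (−1)^{m−l+1}·𝔠_{i,l−2}·𝔠_{m+2,s}. -/
/-- Auxiliary for continuants: `contAux u i n` is the continuant `𝔠_{i, i+n-1}` of the
sequence `u`, computed via the recurrence `𝔠_{i,j} = u j * 𝔠_{i,j-1} + 𝔠_{i,j-2}`. -/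
def contAux (u : ℤ → ℤ) (i : ℤ) : ℕ → ℤ
  | 0 => 1
  | 1 => u i
  | n + 2 => u (i + n + 1) * contAux u i (n + 1) + contAux u i n

/-- `cont u i j` is the continuant `𝔠_{i,j}` of the sequence `u`, with the boundary
conventions `𝔠_{j+1,j} = 1` and `𝔠_{i,j} = 0` for `i > j + 1` (in particular
`𝔠_{j+2,j} = 0`), and the recurrence `𝔠_{i,j} = u j * 𝔠_{i,j-1} + 𝔠_{i,j-2}`. -/
def cont (u : ℤ → ℤ) (i j : ℤ) : ℤ :=
  if j + 1 < i then 0 else contAux u i (j + 1 - i).toNat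

theorem cont_rec (u : ℤ → ℤ) (i j : ℤ) (h : i ≤ j) :
    cont u i j = u j * cont u i (j - 1) + cont u i (j - 2) := by
  obtain ⟨n, rfl⟩ : ∃ n : ℕ, j = i + n := ⟨(j - i).toNat, by omega⟩
  unfold cont
  rcases n with _ | n
  · have e1 : (i + ((0 : ℕ) : ℤ) + 1 - i).toNat = 1 := by omega
    have e2 : (i + ((0 : ℕ) : ℤ) - 1 + 1 - i).toNat = 0 := by omega
    rw [if_neg (by omega), if_neg (by omega), if_pos (by omega), e1, e2]
    simp [contAux]
  · have e1 : (i + ((n + 1 : ℕ) : ℤ) + 1 - i).toNat = n + 2 := by omega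
    have e2 : (i + ((n + 1 : ℕ) : ℤ) - 1 + 1 - i).toNat = n + 1 := by omega
    have e3 : (i + ((n + 1 : ℕ) : ℤ) - 2 + 1 - i).toNat = n := by omega
    rw [if_neg (by omega), if_neg (by omega), if_neg (by omega), e1, e2, e3, contAux]
    push_cast
    rw [add_assoc i]

theorem cont_one (u : ℤ → ℤ) (i j : ℤ) (h : i = j + 1) : cont u i j = 1 := by
  subst h
  simp [cont, contAux]

theorem cont_zero (u : ℤ → ℤ) (i j : ℤ) (h : j + 1 < i) : cont u i j = 0 := by
  simp [cont, h]

theorem cont_base (u : ℤ → ℤ) (i l : ℤ) (hil : i ≤ l) (k : ℕ) :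
    cont u i (l + k - 1) * cont u l (l + k - 2) - cont u i (l + k - 2) * cont u l (l + k - 1)
      = (-1) ^ (k + 1) * cont u i (l - 2) := by
  induction k with
  | zero =>
    rw [cont_zero u l (l + (0 : ℕ) - 2) (by omega), cont_one u l (l + (0 : ℕ) - 1) (by omega)]
    simp
  | succ k ih =>
    have e1 : l + ((k + 1 : ℕ) : ℤ) - 1 = l + k := by push_cast; ring
    have e2 : l + ((k + 1 : ℕ) : ℤ) - 2 = l + k - 1 := by push_cast; ring
    rw [e1, e2, cont_rec u i (l + k) (by omega), cont_rec u l (l + k) (by omega), pow_succ]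
    linear_combination -ih

theorem cont_step (u : ℤ → ℤ) (i l : ℤ) (hil : i ≤ l) (k n : ℕ) :
    cont u i (l + k - 2 + n) * cont u l (l + k - 2)
      - cont u i (l + k - 2) * cont u l (l + k - 2 + n)
      = (-1) ^ (k + 1) * (cont u i (l - 2) * cont u (l + k) (l + k - 2 + n)) := by
  induction n using Nat.twoStepInduction with
  | zero =>
    rw [cont_zero u (l + k) (l + k - 2 + (0 : ℕ)) (by omega)]
    simp [mul_comm]
  | one =>
    rw [cont_one u (l + k) (l + k - 2 + (1 : ℕ)) (by push_cast; ring)]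
    have e : l + (k : ℤ) - 2 + (1 : ℕ) = l + k - 1 := by push_cast; ring
    rw [e, mul_one]
    exact cont_base u i l hil k
  | more n ih1 ih2 =>
    have e1 : l + (k : ℤ) - 2 + ((n + 2 : ℕ) : ℤ) - 1 = l + k - 2 + ((n + 1 : ℕ) : ℤ) := by
      push_cast; ring
    have e2 : l + (k : ℤ) - 2 + ((n + 2 : ℕ) : ℤ) - 2 = l + k - 2 + (n : ℤ) := by
      push_cast; ring
    rw [cont_rec u i (l + k - 2 + ((n + 2 : ℕ) : ℤ)) (by omega),
      cont_rec u l (l + k - 2 + ((n + 2 : ℕ) : ℤ)) (by omega),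
      cont_rec u (l + k) (l + k - 2 + ((n + 2 : ℕ) : ℤ)) (by omega), e1, e2]
    linear_combination ih1 + u (l + k - 2 + ((n + 2 : ℕ) : ℤ)) * ih2

theorem euler_identity_for_continuants
    (t : ℕ) (u : ℤ → ℤ) (hu : ∀ k : ℤ, 1 ≤ k → k ≤ (t : ℤ) → 0 < u k)
    (i l m s : ℤ) (hi : 1 ≤ i) (hil : i ≤ l) (hlm : l ≤ m + 2)
    (hms : m ≤ s) (hst : s ≤ (t : ℤ)) :
    cont u i s * cont u l m - cont u i m * cont u l s =
      (-1 : ℤ) ^ (m - l + 1).natAbs * (cont u i (l - 2) * cont u (m + 2) s) := by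
  obtain ⟨k, rfl⟩ : ∃ k : ℕ, m = l + k - 2 := ⟨(m + 2 - l).toNat, by omega⟩
  obtain ⟨n, rfl⟩ : ∃ n : ℕ, s = l + k - 2 + n := ⟨(s - (l + k - 2)).toNat, by omega⟩
  have hs : (-1 : ℤ) ^ (l + (k : ℤ) - 2 - l + 1).natAbs = (-1) ^ (k + 1) := by
    rcases k with _ | k
    · have e : (l + ((0 : ℕ) : ℤ) - 2 - l + 1).natAbs = 1 := by omega
      rw [e]
    · have e : (l + ((k + 1 : ℕ) : ℤ) - 2 - l + 1).natAbs = k := by omega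
      rw [e]
      ring
  rw [hs, cont_step u i l hil k n, sub_add_cancel]
end

section
/- Explicit formulas for the first half of the remainders of the Euclidean algorithm with symmetric quotients: let q_1, …, q_s be positive integers, let r_1, …, r_{2s+2} be the associated remainder sequence of the symmetric Euclidean scheme, and let 𝔠_{i,j} denote the continuants of (q_1, …, q_s). Then for every 1 ≤ i ≤ s+1, r_i = 𝔠_{1,s}·𝔠_{i,s} + 𝔠_{1,s−1}·𝔠_{i,s−1}. -/
/-- The symmetric doubling of `(q_1, …, q_s)`:
`(Q_1, …, Q_{2s}) = (q_1, …, q_s, q_s, …, q_1)`. -/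
def symQuot (q : ℤ → ℤ) (s : ℕ) (k : ℤ) : ℤ :=
  if k ≤ (s : ℤ) then q k else q (2 * (s : ℤ) + 1 - k)

/-- Auxiliary: `symAux q s m` is the remainder `r_{2s+2-m}` of the symmetric
Euclidean scheme attached to `(q_1, …, q_s)`. -/
def symAux (q : ℤ → ℤ) (s : ℕ) : ℕ → ℤ
  | 0 => 0
  | 1 => 1
  | m + 2 => symQuot q s (2 * (s : ℤ) - (m : ℤ)) * symAux q s (m + 1) + symAux q s m

/-- `symRem q s k` is the remainder `r_k` of the symmetric Euclidean scheme attached to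
`(q_1, …, q_s)`: with `(Q_1, …, Q_{2s}) = (q_1, …, q_s, q_s, …, q_1)`, one has
`r_{2s+2} = 0`, `r_{2s+1} = 1`, and `r_k = Q_k * r_{k+1} + r_{k+2}` for `1 ≤ k ≤ 2s`. -/
def symRem (q : ℤ → ℤ) (s : ℕ) (k : ℤ) : ℤ :=
  symAux q s (2 * (s : ℤ) + 2 - k).toNat

theorem contAux_left (u : ℤ → ℤ) (n : ℕ) : ∀ i : ℤ,
    contAux u i (n + 2) = u i * contAux u (i + 1) (n + 1) + contAux u (i + 2) n := by
  induction n using Nat.strong_induction_on with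
  | _ n ih =>
    intro i
    match n, ih with
    | 0, _ => simp [contAux]; ring
    | 1, _ =>
      simp only [contAux]
      norm_num
      rw [show i + 1 + 1 = i + 2 by ring]
      ring
    | n + 2, ih =>
      have h0 := ih n (by omega) i
      have h1 := ih (n + 1) (by omega) i
      rw [contAux, h0, h1]
      have e1 : contAux u (i + 1) (n + 2 + 1) = u (i + n + 3) * contAux u (i + 1) (n + 1 + 1)
          + contAux u (i + 1) (n + 1) := by
        rw [contAux]; congr 3; push_cast; ring
      have e2 : contAux u (i + 2) (n + 2) = u (i + n + 3) * contAux u (i + 2) (n + 1)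
          + contAux u (i + 2) n := by
        rw [contAux]; congr 3; ring
      rw [e1, e2, show i + ((n + 2 : ℕ) : ℤ) + 1 = i + n + 3 by push_cast; ring]
      ring

theorem symAux_low (q : ℤ → ℤ) (s : ℕ) (m : ℕ) : m ≤ s →
    symAux q s (m + 1) = contAux q 1 m := by
  induction m using Nat.strong_induction_on with
  | _ m ih =>
    intro hm
    match m, ih with
    | 0, _ => simp [contAux, symAux]
    | 1, _ =>
      have : ¬ (2 * (s : ℤ) ≤ s) := by omega
      simp [contAux, symAux, symQuot, this]
    | n + 2, ih =>
      rw [symAux, ih (n + 1) (by omega) (by omega), ih n (by omega) (by omega), contAux, symQuot,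
        if_neg (by push_cast; omega)]
      congr 3; push_cast; ring

theorem symAux_high (q : ℤ → ℤ) (s : ℕ) (hs : 1 ≤ s) (d : ℕ) :
    symAux q s (s + d + 2) = contAux q 1 s * contAux q (s - d) (d + 1) +
      contAux q 1 (s - 1) * contAux q (s - d) d := by
  have h0 := symAux_low q s s le_rfl
  have h1 := symAux_low q s (s - 1) (by omega)
  rw [Nat.sub_add_cancel hs] at h1
  induction d using Nat.strong_induction_on with
  | _ d ih =>
    have e : symQuot q s (2 * (s : ℤ) - ((s + d : ℕ) : ℤ)) = q (s - d) := by
      rw [symQuot, if_pos (by push_cast; omega)]; congr 1; push_cast; ring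
    rw [symAux, e]
    match d, ih with
    | 0, _ => simp [contAux, h0, h1]; ring
    | 1, ih =>
      have := ih 0 (by omega)
      rw [show s + 1 + 1 = s + 0 + 2 by ring, this, h0, contAux_left]
      simp [contAux]; ring
    | n + 2, ih =>
      have a := ih (n + 1) (by omega)
      have b := ih n (by omega)
      rw [show s + (n + 2) + 1 = s + (n + 1) + 2 by ring, a,
        show s + (n + 2) = s + n + 2 by ring, b, contAux_left q (n + 1) (s - ((n + 2 : ℕ) : ℤ)),
        contAux_left q n (s - ((n + 2 : ℕ) : ℤ))]
      rw [show (s : ℤ) - ((n + 2 : ℕ) : ℤ) + 1 = s - ((n + 1 : ℕ) : ℤ) by push_cast; ring,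
        show (s : ℤ) - ((n + 2 : ℕ) : ℤ) + 2 = s - (n : ℤ) by push_cast; ring]
      ring

theorem symRem_first_half_formula
    (s : ℕ) (hs : 1 ≤ s) (q : ℤ → ℤ) (hq : ∀ k : ℤ, 1 ≤ k → k ≤ (s : ℤ) → 0 < q k)
    (i : ℤ) (hi : 1 ≤ i) (his : i ≤ (s : ℤ) + 1) :
    symRem q s i =
      cont q 1 (s : ℤ) * cont q i (s : ℤ) +
        cont q 1 ((s : ℤ) - 1) * cont q i ((s : ℤ) - 1) := by
  have c1 : cont q 1 (s : ℤ) = contAux q 1 s := by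
    rw [cont, if_neg (by omega)]; congr 1; omega
  have c2 : cont q 1 ((s : ℤ) - 1) = contAux q 1 (s - 1) := by
    rw [cont, if_neg (by omega)]; congr 1; omega
  rw [c1, c2]
  rcases eq_or_lt_of_le his with h | h
  · subst h
    rw [symRem, show (2 * (s : ℤ) + 2 - (s + 1)).toNat = s + 1 by omega, symAux_low q s s le_rfl,
      cont, cont, if_neg (by omega), if_pos (by omega)]
    simp [contAux]
  · obtain ⟨d, hd⟩ : ∃ d : ℕ, i = s - d := ⟨(s - i).toNat, by omega⟩
    subst hd
    rw [symRem, show (2 * (s : ℤ) + 2 - (s - d)).toNat = s + d + 2 by omega, symAux_high q s hs,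
      cont, cont, if_neg (by omega), if_neg (by omega),
      show ((s : ℤ) + 1 - (s - d)).toNat = d + 1 by omega,
      show ((s : ℤ) - 1 + 1 - (s - d)).toNat = d by omega]
end

section
/- Brillhart's formula: let q_1, …, q_s be positive integers and let r_1, …, r_{2s+2} be the associated remainder sequence of the symmetric Euclidean scheme with n = r_1. Then n = r_{s+1}² + r_{s+2}²; that is, n is the sum of the squares of the two middle remainders. -/
lemma symAux_invariant (q : ℤ → ℤ) (s : ℕ) (t : ℕ) : t ≤ s →
    symAux q s (2 * s + 1) =
      symAux q s (t + 1) * symAux q s (2 * s + 1 - t) + symAux q s t * symAux q s (2 * s - t) := by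
  induction t with
  | zero => intro _; simp [symAux]
  | succ t ih =>
    intro ht
    rw [ih (by omega)]
    obtain ⟨m, hm⟩ : ∃ m, 2 * s = m + t + 1 := ⟨2 * s - t - 1, by omega⟩
    have e1 : 2 * s + 1 - t = m + 2 := by omega
    have e2 : 2 * s - t = m + 1 := by omega
    have e3 : 2 * s + 1 - (t + 1) = m + 1 := by omega
    have e4 : 2 * s - (t + 1) = m := by omega
    rw [e1, e2, e3, e4]
    have h1 : symAux q s (m + 2) = q (t + 1) * symAux q s (m + 1) + symAux q s m := by
      rw [symAux, symQuot, if_pos (by omega)]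
      have : 2 * (s : ℤ) - m = t + 1 := by omega
      rw [this]
    have h2 : symAux q s (t + 1 + 1) = q (t + 1) * symAux q s (t + 1) + symAux q s t := by
      rw [symAux, symQuot, if_neg (by omega)]
      have : 2 * (s : ℤ) + 1 - (2 * s - t) = t + 1 := by omega
      rw [this]
    rw [h1, h2]
    ring

theorem brillhart_sum_of_two_squares
    (s : ℕ) (hs : 1 ≤ s) (q : ℤ → ℤ) (hq : ∀ k : ℤ, 1 ≤ k → k ≤ (s : ℤ) → 0 < q k) :
    symRem q s 1 = symRem q s ((s : ℤ) + 1) ^ 2 + symRem q s ((s : ℤ) + 2) ^ 2 := by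
  have h := symAux_invariant q s s le_rfl
  have e1 : (2 * (s : ℤ) + 2 - 1).toNat = 2 * s + 1 := by omega
  have e2 : (2 * (s : ℤ) + 2 - (s + 1)).toNat = s + 1 := by omega
  have e3 : (2 * (s : ℤ) + 2 - (s + 2)).toNat = s := by omega
  have e4 : 2 * s + 1 - s = s + 1 := by omega
  have e5 : 2 * s - s = s := by omega
  rw [e4, e5] at h
  rw [symRem, symRem, symRem, e1, e2, e3, h]
  ring
end

section
/- First family of quadratic forms in the remainders: let q_1, …, q_s be positive integers, let r_1, …, r_{2s+2} be the associated remainder sequence of the symmetric Euclidean scheme with n = r_1, and let i, j be integers with 0 ≤ j ≤ i ≤ s. Let r'_1, r'_2, … denote the remainder sequence of the symmetric Euclidean scheme associated to the truncated sequence (q_{i−j+1}, …, q_s). Then r_{i−j+1}·r_{i+j+1} + r_{2s+2−i−j}·r_{2s+2−i+j} = n·r'_{2j+1}. -/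
/-- Continuant of `U (a+1), …, U (a+m-1)`. -/
def eF (U : ℕ → ℤ) (a : ℕ) : ℕ → ℤ
  | 0 => 0
  | 1 => 1
  | m + 2 => U (a + m + 1) * eF U a (m + 1) + eF U a m

theorem eF_left (U : ℕ → ℤ) (a m : ℕ) :
    eF U a (m + 2) = U (a + 1) * eF U (a + 1) (m + 1) + eF U (a + 2) m := by
  induction m using Nat.twoStepInduction with
  | zero => simp [eF]
  | one => simp [eF]; ring
  | more m h1 h2 =>
    rw [eF, h1, h2, eF.eq_3 U (a + 1) (m + 1), eF.eq_3 U (a + 2) m, show a + 1 + (m + 1) + 1 = a + (m + 2) + 1 by ring,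
      show a + 2 + m + 1 = a + (m + 2) + 1 by ring]
    ring

theorem eF_det (U : ℕ → ℤ) (a c : ℕ) :
    eF U 0 (a + c + 2) * eF U a (c + 1) =
      eF U 0 (a + c + 1) * eF U a (c + 2) + (-1) ^ c * eF U 0 a := by
  induction c with
  | zero => simp [eF]; ring
  | succ c ih =>
    rw [show a + (c + 1) + 2 = (a + c + 1) + 2 by ring, eF, eF.eq_3 U a (c + 1),
      show 0 + (a + c + 1) + 1 = a + (c + 1) + 1 by ring,
      show a + c + 1 + 1 = a + c + 2 by ring, show a + (c + 1) + 1 = a + c + 2 by ring,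
      show c + 1 + 1 = c + 2 by ring, pow_succ]
    linear_combination -ih

theorem eF_euler (U : ℕ → ℤ) (a c e : ℕ) :
    eF U 0 (a + c + e + 1) * eF U a (c + 1) =
      eF U 0 (a + c + 1) * eF U a (c + e + 1) + (-1) ^ c * eF U 0 a * eF U (a + c + 1) e := by
  induction e using Nat.twoStepInduction with
  | zero => simp [eF]
  | one => simpa [eF] using eF_det U a c
  | more e h1 h2 =>
    rw [show a + c + (e + 2) + 1 = (a + c + e + 1) + 2 by ring,
      show c + (e + 2) + 1 = (c + e + 1) + 2 by ring, eF, eF.eq_3 U a, eF.eq_3 U (a + c + 1),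
      show 0 + (a + c + e + 1) + 1 = a + c + e + 2 by ring,
      show a + (c + e + 1) + 1 = a + c + e + 2 by ring,
      show a + c + 1 + e + 1 = a + c + e + 2 by ring]
    rw [show a + c + (e + 1) + 1 = a + c + e + 1 + 1 by ring,
      show c + (e + 1) + 1 = c + e + 1 + 1 by ring] at h2
    linear_combination h1 + U (a + c + e + 2) * h2

theorem symQuot_symm (q : ℤ → ℤ) (s : ℕ) (k l : ℤ) (h : k + l = 2 * (s : ℤ) + 1) :
    symQuot q s k = symQuot q s l := by
  unfold symQuot
  split_ifs
  · omega
  · congr 1; omega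
  · congr 1; omega
  · omega

theorem symQuot_shift (q : ℤ → ℤ) (s t i j d : ℕ) (k : ℤ) (h : t + d = s) (hd : d + j = i) :
    symQuot (fun k => q (k + (i : ℤ) - (j : ℤ))) t k = symQuot q s (k + d) := by
  unfold symQuot
  split_ifs
  · exact congrArg q (by omega)
  · omega
  · omega
  · exact congrArg q (by omega)

theorem symAux_eq_shift (q : ℤ → ℤ) (s t i j d : ℕ) (h : t + d = s) (hd : d + j = i) (m : ℕ) :
    symAux (fun k => q (k + (i : ℤ) - (j : ℤ))) t m = eF (fun k => symQuot q s k) d m := by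
  induction m using Nat.twoStepInduction with
  | zero => rfl
  | one => rfl
  | more m h1 h2 =>
    rw [symAux, eF, h1, h2, symQuot_shift q s t i j d _ h hd]
    rw [symQuot_symm q s _ ((d + m + 1 : ℕ) : ℤ) (by push_cast; omega)]

theorem symAux_eq (q : ℤ → ℤ) (s m : ℕ) :
    symAux q s m = eF (fun k => symQuot q s k) 0 m := by
  have := symAux_eq_shift q s s 0 0 0 rfl rfl m
  simpa using this

theorem symAux_eq_left (q : ℤ → ℤ) (s m : ℕ) : ∀ a : ℕ, a + m = 2 * s + 1 →
    symAux q s m = eF (fun k => symQuot q s k) a m := by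
  induction m using Nat.twoStepInduction with
  | zero => intro a _; rfl
  | one => intro a _; rfl
  | more m h1 h2 =>
    intro a ha
    rw [symAux, eF_left, h1 (a + 2) (by omega), h2 (a + 1) (by omega)]
    rw [show 2 * (s : ℤ) - (m : ℤ) = ((a + 1 : ℕ) : ℤ) by push_cast; omega]

theorem first_family_of_quadratic_forms
    (s : ℕ) (hs : 1 ≤ s) (q : ℤ → ℤ) (hq : ∀ k : ℤ, 1 ≤ k → k ≤ (s : ℤ) → 0 < q k)
    (i j : ℕ) (hji : j ≤ i) (his : i ≤ s) :
    symRem q s ((i : ℤ) - (j : ℤ) + 1) * symRem q s ((i : ℤ) + (j : ℤ) + 1) +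
        symRem q s (2 * (s : ℤ) + 2 - (i : ℤ) - (j : ℤ)) *
          symRem q s (2 * (s : ℤ) + 2 - (i : ℤ) + (j : ℤ)) =
      symRem q s 1 *
        symRem (fun k => q (k + (i : ℤ) - (j : ℤ))) (s - i + j) (2 * (j : ℤ) + 1) := by
  obtain ⟨d, rfl⟩ := Nat.exists_eq_add_of_le' hji
  obtain ⟨f, rfl⟩ := Nat.exists_eq_add_of_le' his
  have key := eF_euler (fun k => symQuot q (f + (d + j)) k) d (2 * f) (d + 2 * j)
  rw [← symAux_eq, ← symAux_eq, ← symAux_eq, ← symAux_eq_left _ _ (2 * f + (d + 2 * j) + 1) d (by omega),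
    ← symAux_eq_left _ _ _ (d + 2 * f + 1) (by omega),
    ← symAux_eq_shift q _ (f + (d + j) - (d + j) + j) (d + j) j d (by omega) rfl] at key
  rw [Even.neg_one_pow (even_two_mul f)] at key
  unfold symRem
  rw [show (2 * ((f + (d + j) : ℕ) : ℤ) + 2 - (((d + j : ℕ) : ℤ) - (j : ℤ) + 1)).toNat
      = 2 * f + (d + 2 * j) + 1 by omega,
    show (2 * ((f + (d + j) : ℕ) : ℤ) + 2 - (((d + j : ℕ) : ℤ) + (j : ℤ) + 1)).toNat
      = d + 2 * f + 1 by omega,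
    show (2 * ((f + (d + j) : ℕ) : ℤ) + 2 -
      (2 * ((f + (d + j) : ℕ) : ℤ) + 2 - ((d + j : ℕ) : ℤ) - (j : ℤ))).toNat = d + 2 * j by omega,
    show (2 * ((f + (d + j) : ℕ) : ℤ) + 2 -
      (2 * ((f + (d + j) : ℕ) : ℤ) + 2 - ((d + j : ℕ) : ℤ) + (j : ℤ))).toNat = d by omega,
    show (2 * ((f + (d + j) : ℕ) : ℤ) + 2 - 1).toNat = d + 2 * f + (d + 2 * j) + 1 by omega,
    show (2 * ((f + (d + j) - (d + j) + j : ℕ) : ℤ) + 2 - (2 * (j : ℤ) + 1)).toNat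
      = 2 * f + 1 by omega]
  linear_combination -key
end

section
/- Second family of quadratic forms in the remainders: let q_1, …, q_s be positive integers, let r_1, …, r_{2s+2} be the associated remainder sequence of the symmetric Euclidean scheme with n = r_1, and let i, j be integers with 0 ≤ j ≤ i ≤ s. Let r'_1, r'_2, … denote the remainder sequence of the symmetric Euclidean scheme associated to the truncated sequence (q_{i−j+1}, …, q_s). Then r_{i−j+1}·r_{i+j+2} − r_{2s+1−i−j}·r_{2s+2−i+j} = n·r'_{2j+2}. -/
theorem abs_G (N : ℕ) (a f : ℕ → ℤ) (h0 : a 0 = 0) (h1 : a 1 = 1)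
    (ha : ∀ m, a (m + 2) = f m * a (m + 1) + a m)
    (hf : ∀ m p, m + p + 2 = N → f m = f p) (d : ℕ) :
    ∀ p, d + p + 1 = N → a (p + 1) * a (d + 1) + a p * a d = a N := by
  induction d with
  | zero => intro p hp; subst hp; simp [h0, h1]
  | succ d ih =>
    intro p hp
    have h := ih (p + 1) (by omega)
    have e := hf d p (by omega)
    rw [ha p] at h
    rw [← h, ha d, e]
    ring

theorem abs_F (N d : ℕ) (a b f : ℕ → ℤ) (h0 : a 0 = 0) (h1 : a 1 = 1)
    (ha : ∀ m, a (m + 2) = f m * a (m + 1) + a m)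
    (hf : ∀ m p, m + p + 2 = N → f m = f p)
    (b0 : b 0 = 0) (b1 : b 1 = 1)
    (hb : ∀ m, b (m + 2) = f (d + m) * b (m + 1) + b m) (t : ℕ) :
    (∀ p, d + t + p = N →
      a (p + t) * a (d + t) - (-1) ^ t * a p * a d = a N * b t) ∧
    (∀ p, d + (t + 1) + p = N →
      a (p + (t + 1)) * a (d + (t + 1)) - (-1) ^ (t + 1) * a p * a d = a N * b (t + 1)) := by
  induction t with
  | zero =>
    refine ⟨fun p hp => by simp [b0], fun p hp => ?_⟩
    have h := abs_G N a f h0 h1 ha hf d p (by omega)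
    simp only [zero_add, b1, ← h]
    ring
  | succ t ih =>
    refine ⟨ih.2, fun p hp => ?_⟩
    have x := ih.1 (p + 2) (by omega)
    have y := ih.2 (p + 1) (by omega)
    have e := hf (d + t) p (by omega)
    rw [show p + 2 + t = p + (t + 1 + 1) by ring, ha p] at x
    rw [show p + 1 + (t + 1) = p + (t + 1 + 1) by ring] at y
    have hbt := hb t
    have hat := ha (d + t)
    rw [show t + 1 + 1 = t + 2 by ring] at *
    rw [show d + (t + 2) = d + t + 2 by ring, hat, hbt, e]
    rw [show d + (t + 1) = d + t + 1 by ring] at y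
    linear_combination x + f p * y

theorem second_family_of_quadratic_forms
    (s : ℕ) (hs : 1 ≤ s) (q : ℤ → ℤ) (hq : ∀ k : ℤ, 1 ≤ k → k ≤ (s : ℤ) → 0 < q k)
    (i j : ℕ) (hji : j ≤ i) (his : i ≤ s) :
    symRem q s ((i : ℤ) - (j : ℤ) + 1) * symRem q s ((i : ℤ) + (j : ℤ) + 2) -
        symRem q s (2 * (s : ℤ) + 1 - (i : ℤ) - (j : ℤ)) *
          symRem q s (2 * (s : ℤ) + 2 - (i : ℤ) + (j : ℤ)) =
      symRem q s 1 *
        symRem (fun k => q (k + (i : ℤ) - (j : ℤ))) (s - i + j) (2 * (j : ℤ) + 2) := by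
  obtain ⟨d, rfl⟩ := Nat.exists_eq_add_of_le hji
  obtain ⟨u, rfl⟩ := Nat.exists_eq_add_of_le his
  have key := (abs_F (2 * (j + d + u) + 1) d (symAux q (j + d + u))
    (symAux (fun k => q (k + ((j + d : ℕ) : ℤ) - (j : ℤ))) (j + d + u - (j + d) + j))
    (fun m => symQuot q (j + d + u) ((m : ℤ) + 1)) rfl rfl
    (fun m => by
      rw [symAux, symQuot_symm q _ _ ((m : ℤ) + 1) (by ring)])
    (fun m p h => symQuot_symm q _ _ _ (by push_cast; omega)) rfl rfl
    (fun m => by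
      rw [symAux]
      congr 2
      unfold symQuot
      push_cast
      split_ifs <;> first | omega | (congr 1; omega)) (2 * u)).1 (2 * j + d + 1) (by ring)
  rw [pow_mul] at key
  simp only [symRem]
  convert key using 2
  · congr 2 <;> omega
  · rw [neg_one_sq, one_pow, one_mul]
    congr 2 <;> omega
  · congr 1; omega
  · congr 1; omega
end

section
/- If the Euclidean algorithm with relatively prime positive integers n and a produces a symmetric sequence of quotients, then n divides a² + 1: precisely, let q_1, …, q_s be positive integers and let r_1, …, r_{2s+2} be the associated remainder sequence of the symmetric Euclidean scheme with n = r_1 and a = r_2. Then a² ≡ −1 (mod n). -/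
theorem symQuot_palin (q : ℤ → ℤ) (s : ℕ) (k : ℤ) :
    symQuot q s (2 * (s : ℤ) + 1 - k) = symQuot q s k := by
  unfold symQuot
  split_ifs with h1 h2 h2
  · omega
  · rfl
  · congr 1; ring
  · omega

theorem symAux_rec (q : ℤ → ℤ) (s m : ℕ) :
    symAux q s (m + 2) = symQuot q s (2 * (s : ℤ) - (m : ℤ)) * symAux q s (m + 1)
      + symAux q s m := by
  rw [symAux]

/-- Modulo `n`, the remainder sequence read backwards is `a` times the sequence, up to sign. -/
theorem symAux_reflect (q : ℤ → ℤ) (s m : ℕ) : ∀ l : ℕ, l + m = 2 * s →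
    (symAux q s (2 * s + 1) ∣
      symAux q s (l + 1) - (-1) ^ (m + 1) * symAux q s (2 * s) * symAux q s m) ∧
    (symAux q s (2 * s + 1) ∣
      symAux q s l - (-1) ^ (m + 2) * symAux q s (2 * s) * symAux q s (m + 1)) := by
  induction m with
  | zero =>
    intro l hl
    obtain rfl : l = 2 * s := by omega
    simp [symAux]
  | succ m ih =>
    intro l hl
    obtain ⟨h1, h2⟩ := ih (l + 1) (by omega)
    refine ⟨h2, ?_⟩
    have e1 := symAux_rec q s l
    have e2 := symAux_rec q s m
    have e3 : symQuot q s (2 * (s : ℤ) - (l : ℤ)) = symQuot q s (2 * (s : ℤ) - (m : ℤ)) := by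
      rw [← symQuot_palin]
      congr 1
      omega
    rw [e3] at e1
    have h := dvd_sub h1 (h2.mul_left (symQuot q s (2 * (s : ℤ) - (m : ℤ))))
    rw [show l + 1 + 1 = l + 2 from rfl, e1] at h
    rw [show m + 1 + 1 = m + 2 from rfl, e2]
    refine h.trans (dvd_of_eq ?_)
    ring

theorem symmetric_scheme_sq_eq_neg_one
    (s : ℕ) (hs : 1 ≤ s) (q : ℤ → ℤ) (hq : ∀ k : ℤ, 1 ≤ k → k ≤ (s : ℤ) → 0 < q k) :
    symRem q s 2 ^ 2 ≡ -1 [ZMOD symRem q s 1] := by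
  have h := (symAux_reflect q s (2 * s) 0 (by omega)).1
  have a1 : symRem q s 1 = symAux q s (2 * s + 1) := by
    unfold symRem; congr 1; omega
  have a2 : symRem q s 2 = symAux q s (2 * s) := by
    unfold symRem; congr 1; omega
  rw [a1, a2]
  refine (Int.modEq_iff_dvd.mpr ?_)
  have e : symAux q s (0 + 1) = 1 := by simp [symAux]
  have p : (-1 : ℤ) ^ (2 * s + 1) = -1 := by simp [pow_succ]
  rw [e, p] at h
  have h' := h.neg_right
  refine h'.trans (dvd_of_eq ?_)
  ring
end

section
/- Floor identity from the proof of the Corollary: let q_1, …, q_s be positive integers with s ≥ 2 and let r_1, …, r_{2s+2} be the associated remainder sequence of the symmetric Euclidean scheme with n = r_1 and a = r_2. Then ⌊n·a/(a²+1)⌋ = ⌊n/a⌋ = q_1; equivalently, writing m = (a²+1)/n (an integer), one has ⌊a/m⌋ = ⌊n/a⌋. -/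
theorem symQuot_pos (s : ℕ) (q : ℤ → ℤ)
    (hq : ∀ k : ℤ, 1 ≤ k → k ≤ (s : ℤ) → 0 < q k) (k : ℤ) (h1 : 1 ≤ k) (h2 : k ≤ 2 * (s : ℤ)) :
    1 ≤ symQuot q s k := by
  unfold symQuot
  split_ifs with h
  · exact hq k h1 h
  · exact hq _ (by omega) (by omega)

theorem symAux_bounds (s : ℕ) (hs : 2 ≤ s) (q : ℤ → ℤ)
    (hq : ∀ k : ℤ, 1 ≤ k → k ≤ (s : ℤ) → 0 < q k) (m : ℕ) (hm : m + 1 ≤ 2 * s) :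
    1 ≤ symAux q s (m + 1) ∧ symAux q s (m + 1) ≤ symAux q s (m + 2) ∧
      q 1 ≤ symAux q s (m + 2) := by
  induction m with
  | zero =>
    have h : symAux q s 2 = q 1 := by
      simp only [symAux, symQuot]
      rw [if_neg (by push_cast; omega)]
      simp
    have h1 : symAux q s 1 = 1 := by simp [symAux]
    have := hq 1 (by omega) (by omega)
    simp only [zero_add, h, h1]
    omega
  | succ m ih =>
    obtain ⟨a, b, c⟩ := ih (by omega)
    have hQ := symQuot_pos s q hq (2 * (s : ℤ) - ((m + 1 : ℕ) : ℤ)) (by push_cast; omega)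
      (by push_cast; omega)
    have e : symAux q s (m + 1 + 2) = symQuot q s (2 * (s : ℤ) - ((m + 1 : ℕ) : ℤ)) *
      symAux q s (m + 2) + symAux q s (m + 1) := by rw [symAux]
    have : symAux q s (m + 2) ≤ symAux q s (m + 1 + 2) := by rw [e]; nlinarith
    exact ⟨by show 1 ≤ symAux q s (m + 2); omega, this, by omega⟩

theorem floor_identity_of_corollary
    (s : ℕ) (hs : 2 ≤ s) (q : ℤ → ℤ) (hq : ∀ k : ℤ, 1 ≤ k → k ≤ (s : ℤ) → 0 < q k) :
    ⌊((symRem q s 1 : ℚ) * (symRem q s 2 : ℚ)) / ((symRem q s 2 : ℚ) ^ 2 + 1)⌋ =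
        ⌊(symRem q s 1 : ℚ) / (symRem q s 2 : ℚ)⌋ ∧
      ⌊(symRem q s 1 : ℚ) / (symRem q s 2 : ℚ)⌋ = q 1 := by
  obtain ⟨t, rfl⟩ : ∃ t, s = t + 2 := ⟨s - 2, by omega⟩
  have e1 : symRem q (t + 2) 1 = symAux q (t + 2) (2 * t + 3 + 2) := by
    unfold symRem; congr 1; push_cast; omega
  have e2 : symRem q (t + 2) 2 = symAux q (t + 2) (2 * t + 2 + 2) := by
    unfold symRem; congr 1; push_cast; omega
  obtain ⟨a1, b1, c1⟩ := symAux_bounds (t + 2) hs q hq (2 * t + 1) (by omega)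
  obtain ⟨a2, b2, c2⟩ := symAux_bounds (t + 2) hs q hq (2 * t + 2) (by omega)
  have hq1 := hq 1 (by omega) (by push_cast; omega)
  have hQ1 : symQuot q (t + 2) (2 * ((t + 2 : ℕ) : ℤ) - ((2 * t + 3 : ℕ) : ℤ)) = q 1 := by
    unfold symQuot
    rw [if_pos (by push_cast; omega)]
    congr 1; push_cast; omega
  have hQ2 := symQuot_pos (t + 2) q hq (2 * ((t + 2 : ℕ) : ℤ) - ((2 * t + 2 : ℕ) : ℤ))
    (by push_cast; omega) (by push_cast; omega)
  have r1 : symAux q (t + 2) (2 * t + 3 + 2) =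
      q 1 * symAux q (t + 2) (2 * t + 2 + 2) + symAux q (t + 2) (2 * t + 1 + 2) := by
    rw [symAux, hQ1]
  have r2 : symAux q (t + 2) (2 * t + 2 + 2) =
      symQuot q (t + 2) (2 * ((t + 2 : ℕ) : ℤ) - ((2 * t + 2 : ℕ) : ℤ)) *
        symAux q (t + 2) (2 * t + 1 + 2) + symAux q (t + 2) (2 * t + 1 + 1) := by
    rw [symAux]
  rw [e1, e2, r1]
  generalize symQuot q (t + 2) (2 * ((t + 2 : ℕ) : ℤ) - ((2 * t + 2 : ℕ) : ℤ)) = Q at *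
  generalize symAux q (t + 2) (2 * t + 2 + 2) = a at *
  generalize symAux q (t + 2) (2 * t + 1 + 2) = r at *
  generalize symAux q (t + 2) (2 * t + 1 + 1) = r' at *
  generalize q 1 = p at *
  have hr : 1 ≤ r := by omega
  have hra : r < a := by nlinarith
  have hpa : p ≤ a := c2
  have key : p ≤ a * r := by nlinarith
  have hrQ : (1 : ℚ) ≤ r := by exact_mod_cast hr
  have hraQ : (r : ℚ) + 1 ≤ a := by exact_mod_cast hra
  have hpQ : (1 : ℚ) ≤ p := by exact_mod_cast hq1
  have keyQ : (p : ℚ) ≤ a * r := by exact_mod_cast key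
  have ha : (0 : ℚ) < a := by linarith
  have f2 : ⌊((p * a + r : ℤ) : ℚ) / (a : ℚ)⌋ = p := by
    rw [Int.floor_eq_iff, le_div_iff₀ ha, div_lt_iff₀ ha]
    push_cast
    constructor <;> nlinarith
  refine ⟨?_, f2⟩
  rw [f2, Int.floor_eq_iff, le_div_iff₀ (by positivity), div_lt_iff₀ (by positivity)]
  push_cast
  constructor <;> nlinarith
end
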